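/- arXiv:0810.5513 — 5 statements merged into one kernel-verified Lean document; each statement's English description precedes it below -/
import Mathlib

section
/- Let G be a finite group and let ψ be an irreducible complex character of G with Frobenius–Schur indicator ε(ψ) = −1. Then 2ψ is the character of a real representation of G, i.e., there exists a finite-dimensional representation of G over ℝ whose complexification has character 2ψ. -/
/-!
Since `ε(ψ) ≠ 0`, the representation `V` affording `ψ` carries a nonzero invariant bilinear form:
otherwise the averages of all elementary forms vanish, and summing suitable entries of them gives
`∑ g, ψ (g²) = 0` (`exists_average_ne_zero`). By irreducibility the form is nondegenerate, so
`ψ g = ψ g⁻¹`. Averaging the standard Hermitian form gives `conj (ψ g) = ψ g⁻¹`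
(`trace_inv_eq_star`). Hence `ψ` is real-valued, and `V`, regarded as a real vector space, has
character `ψ + conj ψ = 2ψ`.
-/

open scoped TensorProduct Classical

noncomputable def FSind {G : Type} [Group G] [Fintype G] (χ : G → ℂ) : ℂ :=
  (Fintype.card G : ℂ)⁻¹ * ∑ g : G, χ (g * g)

/-- `χ` is the character of a (finite-dimensional) irreducible complex representation. -/
def IsIrredChar (G : Type) [Group G] (χ : G → ℂ) : Prop :=
  ∃ (V : Type) (_ : AddCommGroup V) (_ : Module ℂ V) (_ : FiniteDimensional ℂ V)
    (_ : Nontrivial V) (ρ : Representation ℂ G V),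
    (∀ U : Submodule ℂ V, (∀ g : G, ∀ v ∈ U, ρ g v ∈ U) → U = ⊥ ∨ U = ⊤) ∧
    (∀ g : G, χ g = LinearMap.trace ℂ V (ρ g))

/-- `χ` is the character of the complexification of a finite-dimensional real
representation. -/
def IsRealRepChar (G : Type) [Group G] (χ : G → ℂ) : Prop :=
  ∃ (V : Type) (_ : AddCommGroup V) (_ : Module ℝ V) (_ : FiniteDimensional ℝ V)
    (ρ : Representation ℝ G V),
    ∀ g : G, χ g = LinearMap.trace ℂ (ℂ ⊗[ℝ] V) (LinearMap.baseChange ℂ (ρ g))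

section MatrixRep

open Matrix ComplexOrder

variable {G : Type} [Group G] [Fintype G] {n : Type} [Fintype n] [DecidableEq n]

/-- An invertible `B` with `N * B * M' = B`, where `M'` is inverse to `M`, intertwines `N` and
`M`. It is applied with `N` the transpose or the conjugate transpose of `M'`. -/
lemma trace_eq_of_invariant {N M M' B : Matrix n n ℂ} (hM : M' * M = 1)
    (hB : IsUnit B) (h : N * B * M' = B) : N.trace = M.trace := by
  have hd : IsUnit B.det := (Matrix.isUnit_iff_isUnit_det B).1 hB
  have h' : N * B = B * M := by
    rw [← h, Matrix.mul_assoc _ M' M, hM, Matrix.mul_one, h]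
  have h3 : N = B * M * B⁻¹ := by
    rw [← h', Matrix.mul_assoc, Matrix.mul_nonsing_inv _ hd, Matrix.mul_one]
  rw [h3, Matrix.trace_mul_comm, ← Matrix.mul_assoc, Matrix.nonsing_inv_mul _ hd, Matrix.one_mul]

/-- Characters of finite groups satisfy `χ g⁻¹ = conj (χ g)`: the Gram matrix
`∑ h, (M h)ᴴ * M h` is positive definite and invariant. -/
lemma trace_inv_eq_star (M : G →* Matrix n n ℂ) (g : G) :
    (M g⁻¹).trace = star (M g).trace := by
  have hpos : (∑ h : G, (M h)ᴴ * M h).PosDef := by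
    rw [← Finset.add_sum_erase _ _ (Finset.mem_univ (1 : G))]
    refine Matrix.PosDef.add_posSemidef ?_ ?_
    · simpa using Matrix.PosDef.one
    · exact Matrix.posSemidef_sum _ fun h _ => Matrix.posSemidef_conjTranspose_mul_self _
  rw [← Matrix.trace_conjTranspose]
  refine (trace_eq_of_invariant (M' := M g) (by rw [← map_mul]; simp) hpos.isUnit ?_).symm
  rw [Finset.mul_sum, Finset.sum_mul]
  refine Fintype.sum_equiv (Equiv.mulRight g) _ _ fun h => ?_
  simp [Matrix.mul_assoc]

lemma average_invariant (M : G →* Matrix n n ℂ) (E : Matrix n n ℂ) (g : G) :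
    (M g)ᵀ * (∑ h : G, (M h)ᵀ * E * M h) * M g = ∑ h : G, (M h)ᵀ * E * M h := by
  rw [Finset.mul_sum, Finset.sum_mul]
  refine Fintype.sum_equiv (Equiv.mulRight g) _ _ fun h => ?_
  simp [Matrix.mul_assoc]

/-- If the (unnormalised) Frobenius–Schur indicator is nonzero, then some elementary bilinear form
has a nonzero average. -/
lemma exists_average_ne_zero (M : G →* Matrix n n ℂ)
    (hM : ∑ g : G, (M (g * g)).trace ≠ 0) :
    ∃ E : Matrix n n ℂ, ∑ h : G, (M h)ᵀ * E * M h ≠ 0 := by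
  by_contra! H
  apply hM
  -- The `(c, a)` entry of the average of `single a c 1` is `∑ g, (M g) a c * (M g) c a`.
  have key : ∀ a c : n, ∑ g : G, M g a c * M g c a = 0 := by
    intro a c
    have := congrFun (congrFun (H (Matrix.single a c 1)) c) a
    simpa [Matrix.sum_apply, Matrix.mul_apply, Matrix.single_apply, ite_and] using this
  simp only [map_mul, Matrix.trace, Matrix.diag, Matrix.mul_apply]
  rw [Finset.sum_comm]
  refine Finset.sum_eq_zero fun a _ => ?_
  rw [Finset.sum_comm]
  exact Finset.sum_eq_zero fun c _ => key a c

end MatrixRep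

/-- An irreducible character with nonzero Frobenius–Schur indicator is real-valued. -/
lemma star_eq_self_of_FSind_ne_zero {G : Type} [Group G] [Fintype G] {ψ : G → ℂ}
    {V : Type} [AddCommGroup V] [Module ℂ V] [FiniteDimensional ℂ V] (ρ : Representation ℂ G V)
    (hirr : ∀ U : Submodule ℂ V, (∀ g : G, ∀ v ∈ U, ρ g v ∈ U) → U = ⊥ ∨ U = ⊤)
    (hψ : ∀ g : G, ψ g = LinearMap.trace ℂ V (ρ g)) (h : FSind ψ ≠ 0) (g : G) :
    star (ψ g) = ψ g := by
  let b := Module.finBasis ℂ V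
  let M : G →* Matrix _ _ ℂ := 
    (MonoidHomClass.toMonoidHom (LinearMap.toMatrixAlgEquiv b)).comp ρ
  have hMg : ∀ g, M g = LinearMap.toMatrix b b (ρ g) := fun g => rfl
  have htr : ∀ g, ψ g = (M g).trace := fun g => by
    rw [hψ, hMg, LinearMap.trace_eq_matrix_trace ℂ b]
  obtain ⟨E, hE⟩ := exists_average_ne_zero M (by
    intro h0
    apply h
    simp only [FSind, htr, h0, mul_zero])
  have hinv := average_invariant M E
  set B := ∑ h : G, (M h).transpose * E * M h with hB
  have hBM : ∀ g, B * M g = (M g⁻¹).transpose * B := by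
    intro g
    have h1 : (M g⁻¹).transpose * (M g).transpose = 1 := by
      rw [← Matrix.transpose_mul, ← map_mul]; simp
    conv_rhs => rw [← hinv g]
    rw [← Matrix.mul_assoc, ← Matrix.mul_assoc, h1, Matrix.one_mul]
  have hrepr : ∀ g v, b.equivFun (ρ g v) = (M g).mulVec (b.equivFun v) := fun g v => by
    rw [hMg]
    exact (LinearMap.toMatrix_mulVec_repr b b (ρ g) v).symm
  -- The radical of the form is an invariant subspace, so irreducibility makes the nonzero form nondegenerate.
  have hunit : IsUnit B := by
    rcases hirr (LinearMap.ker (B.mulVecLin ∘ₗ b.equivFun.toLinearMap)) (by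
      intro g v hv
      simp only [LinearMap.mem_ker, LinearMap.comp_apply, LinearEquiv.coe_coe,
        Matrix.mulVecLin_apply] at hv ⊢
      rw [hrepr, Matrix.mulVec_mulVec, hBM, ← Matrix.mulVec_mulVec, hv, Matrix.mulVec_zero])
      with hbot | htop
    · rw [← Matrix.mulVec_injective_iff_isUnit]
      have hi := LinearMap.ker_eq_bot.1 hbot
      intro x y hxy
      apply b.equivFun.symm.injective
      apply hi
      simpa only [LinearMap.comp_apply, LinearEquiv.coe_coe, LinearEquiv.apply_symm_apply,
        Matrix.mulVecLin_apply] using hxy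
    · exfalso
      apply hE
      have h0 := LinearMap.ker_eq_top.1 htop
      refine Matrix.mulVec_injective (funext fun x => ?_)
      have hx := LinearMap.congr_fun h0 (b.equivFun.symm x)
      simp only [LinearMap.comp_apply, LinearEquiv.coe_coe, LinearEquiv.apply_symm_apply,
        Matrix.mulVecLin_apply, LinearMap.zero_apply] at hx
      rw [hx, Matrix.zero_mulVec]
  rw [htr, ← trace_inv_eq_star, ← trace_eq_of_invariant (M' := M g) (by rw [← map_mul]; simp)
    hunit (hinv g), Matrix.trace_transpose]

/-- For a complex endomorphism, `Tr_ℝ f = Tr_{ℂ/ℝ} (Tr_ℂ f) = 2 Re (Tr_ℂ f)`. -/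
lemma trace_restrictScalars_real {V : Type} [AddCommGroup V] [Module ℂ V]
    [FiniteDimensional ℂ V] (f : V →ₗ[ℂ] V) :
    LinearMap.trace ℝ V (f.restrictScalars ℝ) = 2 * (LinearMap.trace ℂ V f).re := by
  let b := Module.finBasis ℂ V
  rw [← Algebra.trace_complex_apply,
    LinearMap.trace_eq_matrix_trace ℝ (Complex.basisOneI.smulTower' b),
    LinearMap.restrictScalars_toMatrix, LinearMap.trace_eq_matrix_trace ℂ b]
  simp only [Matrix.trace, Matrix.diag, map_sum, Fintype.sum_prod_type]
  refine Finset.sum_congr rfl fun i _ => ?_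
  rw [Algebra.trace_eq_matrix_trace Complex.basisOneI]
  rfl

/-- If `ψ` is an irreducible complex character of a finite group `G` with
Frobenius–Schur indicator `-1`, then `2ψ` is the character of a real representation. -/
theorem stmt2 (G : Type) [Group G] [Fintype G] (ψ : G → ℂ)
    (h1 : IsIrredChar G ψ) (h2 : FSind ψ = -1) :
    IsRealRepChar G (fun g => 2 * ψ g) := by
  obtain ⟨V, _, _, _, _, ρ, hirr, hψ⟩ := h1
  refine ⟨V, inferInstance, inferInstance, inferInstance,
    { toFun := fun g => (ρ g).restrictScalars ℝ
      map_one' := by ext; simp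
      map_mul' := fun g h => by ext; simp }, fun g => ?_⟩
  have hreal : star (ψ g) = ψ g :=
    star_eq_self_of_FSind_ne_zero ρ hirr hψ (by rw [h2]; norm_num) g
  rw [LinearMap.trace_baseChange]
  change 2 * ψ g = algebraMap ℝ ℂ (LinearMap.trace ℝ V ((ρ g).restrictScalars ℝ))
  rw [trace_restrictScalars_real, ← hψ]
  have := Complex.conj_eq_iff_re.1 hreal
  simp [this]
end

section
/- Let G be a finite group and let χ be an irreducible complex character of G. Suppose χ = Σ_i a_i θ_i is a finite integer linear combination, where each a_i ∈ ℤ and each θ_i is the character of a real representation of G. Then the Frobenius–Schur indicator of χ satisfies ε(χ) = 1. -/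
/-!
The representation is written in matrices `A g`, and the real representations as real matrices `R g`.
Characters of real representations take the same value at `g` and `g⁻¹`, hence so does `χ`, and
`⟨χ, χ̄⟩ = ⟨χ, χ⟩ = 1` yields a non-zero invariant bilinear form `B` on the irreducible
representation. By Schur's lemma `B` is non-degenerate and unique up to scalars, so `Bᵀ = e • B` with
`e = ±1`, and `e` is the Frobenius–Schur indicator (`indicator_eq_of_transpose_eq`).

If `e = -1`, then `χ` has even multiplicity in every real representation
(`not_odd_of_alternating`): the invariant inner product of the real representation induces a
non-degenerate skew form on the space of intertwiners. Then `1 = ⟨χ, χ⟩ = ∑ aᵢ ⟨θᵢ, χ⟩` would be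
even.
-/

open scoped TensorProduct Classical

open Matrix
open scoped ComplexOrder

section FSHelpers

variable {G : Type} [Group G] {n m : ℕ}

/-! ### Matrix models of the representations -/

/-- A real representation, complexified and written in a real basis, has real matrices. The
realness is recorded as `(R g)ᴴ = (R g)ᵀ`. -/
theorem exists_matrix_of_real {θ : G → ℂ} (h : IsRealRepChar G θ) :
    ∃ (m : ℕ) (R : G →* Matrix (Fin m) (Fin m) ℂ), (∀ g, θ g = (R g).trace) ∧
      ∀ g, (R g)ᴴ = (R g)ᵀ := by
  obtain ⟨W, _, _, _, ρ, hθ⟩ := h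
  let b := Module.finBasis ℝ W
  let R : G →* Matrix (Fin (Module.finrank ℝ W)) (Fin (Module.finrank ℝ W)) ℂ :=
    ((Complex.ofRealHom.mapMatrix : _ →+* Matrix _ _ ℂ).toMonoidHom).comp
      ((LinearMap.toMatrixAlgEquiv b).toMonoidHom.comp ρ)
  have hR : ∀ g, R g = (LinearMap.toMatrix b b (ρ g)).map Complex.ofRealHom := fun g => rfl
  refine ⟨_, R, fun g => ?_, fun g => ?_⟩
  · rw [hθ, LinearMap.trace_baseChange, LinearMap.trace_eq_matrix_trace ℝ b, hR]
    exact AddMonoidHom.map_trace Complex.ofRealHom.toAddMonoidHom (LinearMap.toMatrix b b (ρ g))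
  · rw [hR]
    ext i j
    simp [Matrix.conjTranspose_apply]

/-- Besides the matrix model, this records the two consequences of irreducibility used below:
Schur's lemma and `⟨χ, χ⟩ = 1`. -/
theorem exists_matrix_of_irred [Fintype G] {χ : G → ℂ} (h : IsIrredChar G χ) :
    ∃ (n : ℕ) (A : G →* Matrix (Fin n) (Fin n) ℂ), (∀ g, χ g = (A g).trace) ∧
      (∀ M, (∀ g, M * A g = A g * M) → ∃ c : ℂ, M = c • 1) ∧
      (Fintype.card G : ℂ)⁻¹ * ∑ g : G, χ g * χ g⁻¹ = 1 := by
  obtain ⟨V, _, _, _, _, ρ, hirr, hχ⟩ := h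
  have hI : ρ.IsIrreducible :=
    { exists_pair_ne := ⟨⊥, ⊤, fun h => bot_ne_top (α := Submodule ℂ V)
        (congrArg Subrepresentation.toSubmodule h)⟩
      eq_bot_or_eq_top := fun U => (hirr U.toSubmodule fun g v hv => U.apply_mem_toSubmodule g hv).imp
        (fun h => Subrepresentation.toSubmodule_injective h)
        (fun h => Subrepresentation.toSubmodule_injective h) }
  let b := Module.finBasis ℂ V
  let T := LinearMap.toMatrixAlgEquiv b
  refine ⟨_, T.toMonoidHom.comp ρ, fun g => ?_, fun M hM => ?_, ?_⟩
  · rw [hχ, LinearMap.trace_eq_matrix_trace ℂ b]; rfl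
  · have hcomm : ∀ g, T.symm M ∘ₗ ρ g = ρ g ∘ₗ T.symm M := by
      intro g
      have := congrArg T.symm (hM g)
      rw [map_mul, map_mul] at this
      have h2 : T.symm ((T.toMonoidHom.comp ρ) g) = ρ g := T.symm_apply_apply _
      rwa [h2] at this
    obtain ⟨c, hc⟩ :=
      (Representation.IsIrreducible.algebraMap_intertwiningMap_bijective_of_isAlgClosed
        (ρ := ρ)).2 ⟨T.symm M, hcomm⟩
    refine ⟨c, ?_⟩
    have h3 : T.symm M = c • (1 : Module.End ℂ V) :=
      (congrArg Representation.IntertwiningMap.toLinearMap hc).symm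
    rw [← T.apply_symm_apply M, h3, map_smul, map_one]
  · have : Invertible (Nat.card G : ℂ) :=
      invertibleOfNonzero (by exact_mod_cast Nat.card_pos.ne')
    have h := Representation.char_orthonormal ρ ρ
    rw [if_pos ⟨Representation.Equiv.refl ρ⟩, Nat.card_eq_fintype_card] at h
    simpa only [hχ, Representation.character] using h

/-! ### Invariant forms and intertwiners -/

theorem exists_family_span_eq {E : Type*} [AddCommGroup E] [Module ℂ E] [FiniteDimensional ℂ E]
    (H : Submodule ℂ E) : ∃ F : Fin (Module.finrank ℂ H) → E,
      LinearIndependent ℂ F ∧ Submodule.span ℂ (Set.range F) = H := by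
  let b := Module.finBasis ℂ H
  refine ⟨fun k => b k, b.linearIndependent.map' H.subtype H.ker_subtype, ?_⟩
  have : Set.range (fun k => (b k : E)) = H.subtype '' Set.range b := by
    rw [← Set.range_comp]; rfl
  rw [this, Submodule.span_image, b.span_eq, Submodule.map_top, Submodule.range_subtype]

theorem eq_zero_of_posDef {P : Matrix (Fin n) (Fin n) ℂ} (hP : P.PosDef)
    (F : Matrix (Fin n) (Fin m) ℂ) (h : Fᴴ * P * F = 0) : F = 0 := by
  have key : ∀ v, F *ᵥ v = 0 := by
    intro v
    by_contra hv
    have h2 := hP.dotProduct_mulVec_pos hv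
    have h3 : star (F *ᵥ v) ⬝ᵥ (P *ᵥ (F *ᵥ v)) = star v ⬝ᵥ ((Fᴴ * P * F) *ᵥ v) := by
      rw [star_mulVec, ← dotProduct_mulVec, mulVec_mulVec, mulVec_mulVec, Matrix.mul_assoc]
    rw [h3, h] at h2
    simp at h2
  ext i j
  simpa using congrFun (key (Pi.single j 1)) i

/-- By Schur's lemma, an invertible invariant bilinear form spans the space of all of them. -/
theorem eq_smul_of_invariant (A : G →* Matrix (Fin n) (Fin n) ℂ)
    (hS : ∀ M, (∀ g, M * A g = A g * M) → ∃ c : ℂ, M = c • 1)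
    {B : Matrix (Fin n) (Fin n) ℂ} (hBu : IsUnit B) (hB : ∀ g, (A g)ᵀ * B * A g = B)
    (X : Matrix (Fin n) (Fin n) ℂ) (hX : ∀ g, (A g)ᵀ * X * A g = X) : ∃ c : ℂ, X = c • B := by
  have hBd : IsUnit B.det := (Matrix.isUnit_iff_isUnit_det B).1 hBu
  have hinv : ∀ g, A g * A g⁻¹ = 1 := fun g => by rw [← map_mul, mul_inv_cancel, map_one]
  have comm : ∀ Y, (∀ g, (A g)ᵀ * Y * A g = Y) → ∀ g, (A g⁻¹)ᵀ * Y = Y * A g := by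
    intro Y hY g
    conv_lhs => rw [← hY g]
    rw [Matrix.mul_assoc (A g)ᵀ, ← Matrix.mul_assoc, ← Matrix.transpose_mul, hinv]; simp
  obtain ⟨c, hc⟩ := hS (B⁻¹ * X) (by
    intro g
    have e5 : B⁻¹ * (A g⁻¹)ᵀ = A g * B⁻¹ := by
      calc B⁻¹ * (A g⁻¹)ᵀ = B⁻¹ * ((A g⁻¹)ᵀ * B) * B⁻¹ := by
            rw [Matrix.mul_assoc, Matrix.mul_nonsing_inv_cancel_right _ _ hBd]
        _ = A g * B⁻¹ := by rw [comm B hB, Matrix.nonsing_inv_mul_cancel_left _ _ hBd]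
    rw [Matrix.mul_assoc, ← comm X hX, ← Matrix.mul_assoc, e5, Matrix.mul_assoc])
  refine ⟨c, ?_⟩
  have := congrArg (B * ·) hc
  simpa [Matrix.mul_nonsing_inv_cancel_left _ _ hBd] using this

variable [Fintype G]

/-- The multiplicity `⟨tr R, tr A⟩` is the size of a basis of the space of intertwiners from `A`
to `R`. -/
theorem exists_basis_intertwiners (A : G →* Matrix (Fin n) (Fin n) ℂ)
    (R : G →* Matrix (Fin m) (Fin m) ℂ) :
    ∃ (d : ℕ) (F : Fin d → Matrix (Fin m) (Fin n) ℂ), LinearIndependent ℂ F ∧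
      (∀ k g, R g * F k = F k * A g) ∧
      (∀ F' : Matrix (Fin m) (Fin n) ℂ, (∀ g, R g * F' = F' * A g) →
        F' ∈ Submodule.span ℂ (Set.range F)) ∧
      (Fintype.card G : ℂ)⁻¹ * ∑ g : G, (R g).trace * (A g⁻¹).trace = d := by
  let ρ : Representation ℂ G (Fin n → ℂ) :=
    (Matrix.toLinAlgEquiv' : Matrix (Fin n) (Fin n) ℂ ≃ₐ[ℂ] _).toMonoidHom.comp A
  let σ : Representation ℂ G (Fin m → ℂ) :=
    (Matrix.toLinAlgEquiv' : Matrix (Fin m) (Fin m) ℂ ≃ₐ[ℂ] _).toMonoidHom.comp R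
  have hρ : ∀ g, ρ g = Matrix.toLin' (A g) := fun g => rfl
  have hσ : ∀ g, σ g = Matrix.toLin' (R g) := fun g => rfl
  let H : Submodule ℂ (Matrix (Fin m) (Fin n) ℂ) :=
    (Representation.linHom ρ σ).invariants.map
      (LinearMap.toMatrix' : _ ≃ₗ[ℂ] Matrix (Fin m) (Fin n) ℂ).toLinearMap
  have hmem : ∀ X : Matrix (Fin m) (Fin n) ℂ, X ∈ H ↔ ∀ g, R g * X = X * A g := by
    intro X
    have h0 : X ∈ H ↔ Matrix.toLin' X ∈ (Representation.linHom ρ σ).invariants :=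
      Submodule.mem_map_equiv _
    have h1 : Matrix.toLin' X ∈ (Representation.linHom ρ σ).invariants ↔
        ∀ g, Matrix.toLin' X ∘ₗ ρ g = σ g ∘ₗ Matrix.toLin' X :=
      (Representation.mem_linHom_invariants_iff_isIntertwining _).trans
        ⟨fun h g => LinearMap.ext fun v => h.isIntertwining g v,
          fun h => ⟨fun g v => LinearMap.congr_fun (h g) v⟩⟩
    rw [h0, h1]
    refine forall_congr' fun g => ?_
    rw [hρ, hσ, ← Matrix.toLin'_mul, ← Matrix.toLin'_mul, Matrix.toLin'.injective.eq_iff, eq_comm]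
  obtain ⟨F, hF, hspan⟩ := exists_family_span_eq H
  refine ⟨_, F, hF, ?_, ?_, ?_⟩
  · intro k
    rw [← hmem, ← hspan]
    exact Submodule.subset_span ⟨k, rfl⟩
  · intro F' hF'
    rwa [hspan, hmem]
  · have : Invertible (Nat.card G : ℂ) :=
      invertibleOfNonzero (by exact_mod_cast Nat.card_pos.ne')
    rw [LinearEquiv.finrank_map_eq, ← Representation.card_inv_mul_sum_char_eq_finrank,
      Nat.card_eq_fintype_card]
    congr 1
    refine Finset.sum_congr rfl fun g _ => ?_
    rw [Representation.char_linHom, mul_comm, Representation.character, Representation.character,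
      hρ, hσ, Matrix.trace_toLin'_eq, Matrix.trace_toLin'_eq]

/-- The averaged Hermitian form `∑ (A g)ᴴ A g` is positive definite and invariant. -/
theorem posDef_invariant_sum (A : G →* Matrix (Fin n) (Fin n) ℂ) :
    (∑ g, (A g)ᴴ * A g).PosDef ∧
      ∀ h, (A h)ᴴ * (∑ g, (A g)ᴴ * A g) * A h = ∑ g, (A g)ᴴ * A g := by
  constructor
  · rw [← Finset.add_sum_erase _ _ (Finset.mem_univ (1 : G))]
    refine PosDef.add_posSemidef ?_ (posSemidef_sum _ fun g _ =>
      posSemidef_conjTranspose_mul_self _)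
    simpa using PosDef.one
  · intro h
    rw [Finset.mul_sum, Finset.sum_mul]
    refine Fintype.sum_equiv (Equiv.mulRight h) _ _ fun g => ?_
    simp [Matrix.mul_assoc]

/-- A positive definite `Q` carrying the dual representation `g ↦ (A g⁻¹)ᵀ` to the conjugate one
`g ↦ (A g)ᴴᵀ`; it is the inverse of the conjugate of an invariant Hermitian form. -/
theorem exists_posDef_dual_invariant (A : G →* Matrix (Fin n) (Fin n) ℂ) :
    ∃ Q : Matrix (Fin n) (Fin n) ℂ, Q.PosDef ∧ ∀ g, (A g)ᴴᵀ * Q * (A g)ᵀ = Q := by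
  obtain ⟨hP, hPinv⟩ := posDef_invariant_sum A
  set P := ∑ g, (A g)ᴴ * A g
  have hPd : IsUnit P.det := (Matrix.isUnit_iff_isUnit_det P).1 hP.isUnit
  set Q := (Pᵀ)⁻¹
  have hQP : Q * Pᵀ = 1 := Matrix.nonsing_inv_mul _ (by simpa using hPd)
  have hPQ : Pᵀ * Q = 1 := Matrix.mul_nonsing_inv _ (by simpa using hPd)
  refine ⟨Q, hP.transpose.inv, fun g => ?_⟩
  have e : (A g)ᵀ * Pᵀ * (A g)ᴴᵀ = Pᵀ := by
    rw [← Matrix.transpose_mul, ← Matrix.transpose_mul, ← Matrix.mul_assoc, hPinv g]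
  have e1 : (Q * (A g)ᵀ * Pᵀ) * (A g)ᴴᵀ = 1 := by
    rw [Matrix.mul_assoc, Matrix.mul_assoc, ← Matrix.mul_assoc (A g)ᵀ, e, hQP]
  have e2 := mul_eq_one_comm.1 e1
  calc (A g)ᴴᵀ * Q * (A g)ᵀ = (A g)ᴴᵀ * (Q * (A g)ᵀ * Pᵀ) * Q := by
        simp only [Matrix.mul_assoc, hPQ, Matrix.mul_one]
    _ = Q := by rw [e2, Matrix.one_mul]

/-- A non-zero invariant bilinear form on an irreducible representation is non-degenerate. Only
Schur's lemma is used: `Bᴴ Q B` is an invariant Hermitian form, hence a multiple of `P`, and the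
multiple is non-zero because `Q` is positive definite. -/
theorem isUnit_of_invariant (A : G →* Matrix (Fin n) (Fin n) ℂ)
    (hS : ∀ M, (∀ g, M * A g = A g * M) → ∃ c : ℂ, M = c • 1)
    {B : Matrix (Fin n) (Fin n) ℂ} (hB0 : B ≠ 0) (hB : ∀ g, (A g)ᵀ * B * A g = B) :
    IsUnit B := by
  obtain ⟨hP, hPinv⟩ := posDef_invariant_sum A
  set P := ∑ g, (A g)ᴴ * A g
  have hPd : IsUnit P.det := (Matrix.isUnit_iff_isUnit_det P).1 hP.isUnit
  have hinv : ∀ g, A g * A g⁻¹ = 1 := fun g => by rw [← map_mul, mul_inv_cancel, map_one]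
  obtain ⟨Q, hQ, hQinv⟩ := exists_posDef_dual_invariant A
  have hX : ∀ g, (A g)ᴴ * (Bᴴ * Q * B) * A g = Bᴴ * Q * B := by
    intro g
    have e1 : B * A g = (A g⁻¹)ᵀ * B := by
      conv_rhs => rw [← hB g]
      rw [Matrix.mul_assoc, ← Matrix.mul_assoc, ← Matrix.transpose_mul, hinv]; simp
    have e2 : (A g)ᴴ * Bᴴ = Bᴴ * (A g⁻¹)ᴴᵀ := by
      have := congrArg conjTranspose e1
      rw [conjTranspose_mul, conjTranspose_mul] at this
      rw [this]; rfl
    calc _ = ((A g)ᴴ * Bᴴ) * Q * (B * A g) := by simp only [Matrix.mul_assoc]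
      _ = Bᴴ * ((A g⁻¹)ᴴᵀ * Q * (A g⁻¹)ᵀ) * B := by rw [e1, e2]; simp only [Matrix.mul_assoc]
      _ = _ := by rw [hQinv]
  obtain ⟨c, hc⟩ := hS (P⁻¹ * (Bᴴ * Q * B)) (by
    intro g
    have e3 : P * A g = (A g⁻¹)ᴴ * P := by
      conv_rhs => rw [← hPinv g]
      rw [Matrix.mul_assoc, ← Matrix.mul_assoc, ← Matrix.conjTranspose_mul, hinv]; simp
    have e4 : (A g⁻¹)ᴴ * (Bᴴ * Q * B) = (Bᴴ * Q * B) * A g := by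
      conv_lhs => rw [← hX g]
      rw [Matrix.mul_assoc (A g)ᴴ, ← Matrix.mul_assoc, ← Matrix.conjTranspose_mul, hinv]; simp
    have e5 : P⁻¹ * (A g⁻¹)ᴴ = A g * P⁻¹ := by
      calc P⁻¹ * (A g⁻¹)ᴴ = P⁻¹ * ((A g⁻¹)ᴴ * P) * P⁻¹ := by
            rw [Matrix.mul_assoc, Matrix.mul_nonsing_inv_cancel_right _ _ hPd]
        _ = A g * P⁻¹ := by rw [← e3, Matrix.nonsing_inv_mul_cancel_left _ _ hPd]
    rw [Matrix.mul_assoc, ← e4, ← Matrix.mul_assoc, e5, Matrix.mul_assoc])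
  have hXc : Bᴴ * Q * B = c • P := by
    have := congrArg (P * ·) hc
    simpa [Matrix.mul_nonsing_inv_cancel_left _ _ hPd] using this
  have hc0 : c ≠ 0 := by
    rintro rfl
    exact hB0 (eq_zero_of_posDef hQ B (by rw [hXc, zero_smul]))
  have : (c⁻¹ • P⁻¹ * (Bᴴ * Q)) * B = 1 := by
    rw [Matrix.mul_assoc, hXc]
    simp [smul_smul, hc0, Matrix.nonsing_inv_mul _ hPd]
  exact (Matrix.isUnit_iff_isUnit_det B).2 (Matrix.isUnit_det_of_left_inverse this)

/-! ### The indicator as the sign of the invariant form -/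

/-- If the invariant bilinear forms are the multiples of `B` and `Bᵀ = e • B`, then the indicator
is `e`: both are the trace of the endomorphism `X ↦ |G|⁻¹ ∑ (A g)ᵀ Xᵀ (A g)`, whose image lies in
the line of `B`. -/
theorem indicator_eq_of_transpose_eq (A : G →* Matrix (Fin n) (Fin n) ℂ)
    {B : Matrix (Fin n) (Fin n) ℂ} (hB0 : B ≠ 0) (hB : ∀ g, (A g)ᵀ * B * A g = B)
    (huniq : ∀ X : Matrix (Fin n) (Fin n) ℂ, (∀ g, (A g)ᵀ * X * A g = X) → ∃ c : ℂ, X = c • B)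
    {e : ℂ} (he : Bᵀ = e • B) :
    (Fintype.card G : ℂ)⁻¹ * ∑ g : G, (A (g * g)).trace = e := by
  have hcard : (Fintype.card G : ℂ) ≠ 0 := by exact_mod_cast Fintype.card_ne_zero
  let S : Matrix (Fin n) (Fin n) ℂ →ₗ[ℂ] Matrix (Fin n) (Fin n) ℂ :=
    { toFun := fun X => ∑ g, (A g)ᵀ * X * A g
      map_add' := fun X Y => by simp [Matrix.mul_add, Matrix.add_mul, Finset.sum_add_distrib]
      map_smul' := fun c X => by simp [Finset.smul_sum] }
  have hSdef : ∀ X, S X = ∑ g, (A g)ᵀ * X * A g := fun X => rfl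
  have hSinv : ∀ X h, (A h)ᵀ * S X * A h = S X := by
    intro X h
    rw [hSdef, Finset.mul_sum, Finset.sum_mul]
    refine Fintype.sum_equiv (Equiv.mulRight h) _ _ fun g => ?_
    simp [Matrix.mul_assoc]
  have hSB : S B = (Fintype.card G : ℂ) • B := by
    rw [hSdef, Finset.sum_congr rfl fun g _ => hB g]
    simp [Nat.cast_smul_eq_nsmul]
  choose φ hφ using fun X => huniq (S X) (hSinv X)
  obtain ⟨p, q, hpq⟩ : ∃ p q, B p q ≠ 0 := by
    by_contra! h
    exact hB0 (by ext i j; exact h i j)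
  have key : ∑ i, ∑ j, S (Matrix.single j i 1) i j = (Fintype.card G : ℂ) * e := by
    -- After multiplication by a non-zero entry of `B` both sides are entries of `S Bᵀ`.
    apply mul_right_cancel₀ hpq
    have h1 : S Bᵀ = ∑ i, ∑ j, B i j • S (Matrix.single j i 1) := by
      conv_lhs => rw [Matrix.matrix_eq_sum_single Bᵀ]
      rw [Finset.sum_comm]
      simp only [map_sum, ← map_smul, Matrix.smul_single, transpose_apply, smul_eq_mul, mul_one]
    have h2 := congrFun (congrFun h1 p) q
    rw [he, map_smul, hSB] at h2
    simp only [Matrix.sum_apply, Matrix.smul_apply, smul_eq_mul] at h2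
    rw [mul_assoc, mul_left_comm, h2, Finset.sum_mul]
    refine Finset.sum_congr rfl fun i _ => ?_
    rw [Finset.sum_mul]
    refine Finset.sum_congr rfl fun j _ => ?_
    rw [hφ]
    simp only [Matrix.smul_apply, smul_eq_mul]
    ring
  have h3 : ∑ g : G, (A (g * g)).trace = ∑ i, ∑ j, S (Matrix.single j i 1) i j := by
    have h4 : ∀ i j, S (Matrix.single j i 1) i j = ∑ g, A g j i * A g i j := by
      intro i j
      rw [hSdef, Matrix.sum_apply]
      refine Finset.sum_congr rfl fun g _ => ?_
      simp [Matrix.mul_apply, Matrix.single_apply, ite_and]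
    simp_rw [h4]
    simp only [map_mul, Matrix.trace, Matrix.diag, Matrix.mul_apply]
    rw [Finset.sum_comm]
    refine Finset.sum_congr rfl fun i _ => ?_
    rw [Finset.sum_comm]
    exact Finset.sum_congr rfl fun j _ => Finset.sum_congr rfl fun g _ => mul_comm _ _
  rw [h3, key, inv_mul_cancel_left₀ hcard]

/-! ### Multiplicities in real representations -/

/-- A real representation preserves a positive definite Hermitian form that is symmetric, so that it
is an invariant bilinear form too. -/
theorem exists_symm_posDef_invariant (R : G →* Matrix (Fin m) (Fin m) ℂ)
    (hR : ∀ g, (R g)ᴴ = (R g)ᵀ) :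
    ∃ S : Matrix (Fin m) (Fin m) ℂ, S.PosDef ∧ Sᵀ = S ∧ ∀ g, (R g)ᵀ * S * R g = S := by
  obtain ⟨hS, hinv⟩ := posDef_invariant_sum R
  refine ⟨_, hS, ?_, fun g => hR g ▸ hinv g⟩
  simp [Matrix.transpose_sum, hR]

theorem trace_inv_of_real (R : G →* Matrix (Fin m) (Fin m) ℂ)
    (hR : ∀ g, (R g)ᴴ = (R g)ᵀ) (g : G) : (R g⁻¹).trace = (R g).trace := by
  obtain ⟨S, hS, -, hinv⟩ := exists_symm_posDef_invariant R hR
  have hSd : IsUnit S.det := (Matrix.isUnit_iff_isUnit_det S).1 hS.isUnit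
  have e : (R g)ᵀ * S = S * R g⁻¹ := by
    conv_rhs => rw [← hinv g]
    rw [Matrix.mul_assoc, Matrix.mul_assoc, ← map_mul, mul_inv_cancel, map_one, Matrix.mul_one]
  calc (R g⁻¹).trace = (S⁻¹ * (S * R g⁻¹)).trace := by
        rw [Matrix.nonsing_inv_mul_cancel_left _ _ hSd]
    _ = (R g).trace := by
        rw [← e, Matrix.trace_mul_comm, Matrix.mul_nonsing_inv_cancel_right _ _ hSd,
          Matrix.trace_transpose]

/-- An irreducible representation with a skew invariant form `B` has even multiplicity in the
complexification of a real representation. For intertwiners `F k`, `F l` the pulled-back form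
`(F k)ᵀ S (F l)` is a multiple `c k l` of `B`, and `c` is skew. In odd size `c` is singular, which
gives an intertwiner `E ≠ 0` that is `S`-orthogonal to every intertwiner; pairing `E` with its
conjugate `Ē Q B` contradicts positivity of `S`. -/
theorem not_odd_of_alternating (A : G →* Matrix (Fin n) (Fin n) ℂ)
    {B : Matrix (Fin n) (Fin n) ℂ} (hB0 : B ≠ 0) (hBu : IsUnit B)
    (hB : ∀ g, (A g)ᵀ * B * A g = B)
    (huniq : ∀ X : Matrix (Fin n) (Fin n) ℂ, (∀ g, (A g)ᵀ * X * A g = X) → ∃ c : ℂ, X = c • B)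
    (hskew : Bᵀ = -B) (R : G →* Matrix (Fin m) (Fin m) ℂ) (hR : ∀ g, (R g)ᴴ = (R g)ᵀ)
    {d : ℕ} (F : Fin d → Matrix (Fin m) (Fin n) ℂ) (hlin : LinearIndependent ℂ F)
    (hF : ∀ k g, R g * F k = F k * A g)
    (hspan : ∀ F' : Matrix (Fin m) (Fin n) ℂ, (∀ g, R g * F' = F' * A g) →
        F' ∈ Submodule.span ℂ (Set.range F)) : ¬ Odd d := by
  intro hd
  obtain ⟨S, hS, hST, hSinv⟩ := exists_symm_posDef_invariant R hR
  have hpull : ∀ k l, ∃ c : ℂ, (F k)ᵀ * S * F l = c • B := by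
    intro k l
    refine huniq _ fun g => ?_
    calc (A g)ᵀ * ((F k)ᵀ * S * F l) * A g = (F k * A g)ᵀ * S * (F l * A g) := by
          simp only [Matrix.transpose_mul, Matrix.mul_assoc]
      _ = (F k)ᵀ * ((R g)ᵀ * S * R g) * F l := by
          rw [← hF, ← hF]; simp only [Matrix.transpose_mul, Matrix.mul_assoc]
      _ = _ := by rw [hSinv]
  choose c hc using hpull
  let C : Matrix (Fin d) (Fin d) ℂ := Matrix.of c
  have hCskew : Cᵀ = -C := by
    ext k l
    have h1 : c l k • B = (-c k l) • B := by
      rw [← hc l k]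
      have := congrArg transpose (hc k l)
      rw [Matrix.transpose_mul, Matrix.transpose_mul, Matrix.transpose_transpose, hST,
        Matrix.transpose_smul, hskew] at this
      rw [Matrix.mul_assoc, this]; simp
    exact smul_left_injective ℂ hB0 h1
  have hdet : C.det = 0 := by
    have h := congrArg Matrix.det hCskew
    rw [Matrix.det_transpose, Matrix.det_neg, Fintype.card_fin, hd.neg_one_pow] at h
    have h' : (2 : ℂ) * C.det = 0 := by linear_combination h
    simpa using h'
  obtain ⟨x, hx0, hx⟩ := Matrix.exists_vecMul_eq_zero_iff.2 hdet
  let E : Matrix (Fin m) (Fin n) ℂ := ∑ k, x k • F k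
  have hE : ∀ g, R g * E = E * A g := by
    intro g
    simp only [E, Matrix.mul_sum, Matrix.sum_mul, Matrix.mul_smul, Matrix.smul_mul, hF]
  have hEF : ∀ l, Eᵀ * S * F l = 0 := by
    intro l
    have h : Eᵀ * S * F l = (x ᵥ* C) l • B := by
      simp only [E, Matrix.transpose_sum, Matrix.sum_mul, Matrix.transpose_smul, Matrix.smul_mul,
        hc, smul_smul, ← Finset.sum_smul, Matrix.vecMul, dotProduct, C, Matrix.of_apply]
    rw [h, hx, Pi.zero_apply, zero_smul]
  have hEall : ∀ F' : Matrix (Fin m) (Fin n) ℂ, (∀ g, R g * F' = F' * A g) → Eᵀ * S * F' = 0 := by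
    intro F' hF'
    refine Submodule.span_induction (p := fun X _ => Eᵀ * S * X = 0) ?_ ?_ ?_ ?_ (hspan F' hF')
    · rintro _ ⟨l, rfl⟩; exact hEF l
    · simp
    · intro X Y _ _ h1 h2; rw [Matrix.mul_add, h1, h2, add_zero]
    · intro a X _ h1; rw [Matrix.mul_smul, h1, smul_zero]
  obtain ⟨Q, hQ, hQinv⟩ := exists_posDef_dual_invariant A
  -- `Q * B` intertwines `A` with its conjugate.
  have hY : ∀ g, (A g)ᴴᵀ * (Q * B) = Q * B * A g := by
    intro g
    conv_rhs => rw [← hQinv g]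
    conv_lhs => rw [← hB g]
    simp only [Matrix.mul_assoc]
  have h0 := hEall (Eᴴᵀ * (Q * B)) (by
    intro g
    have hRg : R g = (R g)ᴴᵀ := by rw [hR, Matrix.transpose_transpose]
    calc R g * (Eᴴᵀ * (Q * B)) = (R g * E)ᴴᵀ * (Q * B) := by
          conv_lhs => rw [hRg]
          rw [Matrix.conjTranspose_mul, Matrix.transpose_mul, Matrix.mul_assoc]
      _ = Eᴴᵀ * ((A g)ᴴᵀ * (Q * B)) := by
          rw [hE, Matrix.conjTranspose_mul, Matrix.transpose_mul, Matrix.mul_assoc]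
      _ = _ := by rw [hY, ← Matrix.mul_assoc])
  have hYd : IsUnit (Q * B).det := (Matrix.isUnit_iff_isUnit_det _).1 (hQ.isUnit.mul hBu)
  have h1 : Eᵀ * S * Eᴴᵀ = 0 := by
    have := congrArg (· * (Q * B)⁻¹) h0
    simpa only [← Matrix.mul_assoc (Eᵀ * S), Matrix.mul_nonsing_inv_cancel_right _ _ hYd,
      Matrix.zero_mul] using this
  have hE0 : E = 0 := by
    refine eq_zero_of_posDef hS E ?_
    have := congrArg transpose h1
    rwa [Matrix.transpose_mul, Matrix.transpose_mul, Matrix.transpose_transpose,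
      Matrix.transpose_transpose, hST, Matrix.transpose_zero, ← Matrix.mul_assoc] at this
  exact hx0 (funext fun k => Fintype.linearIndependent_iff.1 hlin x hE0 k)

end FSHelpers

/-- If an irreducible complex character `χ` of a finite group `G` is an integer linear
combination of characters of real representations, then `ε(χ) = 1`. -/
theorem stmt5 (G : Type) [Group G] [Fintype G] (χ : G → ℂ) (h1 : IsIrredChar G χ)
    (ι : Type) [Fintype ι] (a : ι → ℤ) (θ : ι → G → ℂ)
    (hθ : ∀ i : ι, IsRealRepChar G (θ i))
    (hsum : ∀ g : G, χ g = ∑ i : ι, (a i : ℂ) * θ i g) :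
    FSind χ = 1 := by
  obtain ⟨n, A, hA, hSchur, hone⟩ := exists_matrix_of_irred h1
  choose m R hRtr hR using fun i => exists_matrix_of_real (hθ i)
  have hχinv : ∀ g, χ g⁻¹ = χ g := by
    intro g
    rw [hsum, hsum]
    exact Finset.sum_congr rfl fun i _ => by rw [hRtr, hRtr, trace_inv_of_real (R i) (hR i)]
  -- `χ` is real, so the multiplicity of `χ` in its dual is `⟨χ, χ⟩ = 1`.
  obtain ⟨B, hB0, hB⟩ : ∃ B : Matrix (Fin n) (Fin n) ℂ, B ≠ 0 ∧ ∀ g, (A g)ᵀ * B * A g = B := by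
    let D : G →* Matrix (Fin n) (Fin n) ℂ :=
      { toFun := fun g => (A g⁻¹)ᵀ
        map_one' := by simp
        map_mul' := fun g h => by simp [Matrix.transpose_mul] }
    have hD : ∀ g, D g = (A g⁻¹)ᵀ := fun g => rfl
    obtain ⟨d, F, hlin, hF, -, hd⟩ := exists_basis_intertwiners A D
    have hd1 : (d : ℂ) = 1 := by
      rw [← hd, ← hone]
      congr 1
      refine Finset.sum_congr rfl fun g _ => ?_
      rw [hD, Matrix.trace_transpose, ← hA, hχinv]
    obtain rfl : d = 1 := by exact_mod_cast hd1
    refine ⟨F 0, hlin.ne_zero 0, fun g => ?_⟩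
    rw [Matrix.mul_assoc, ← hF, hD, ← Matrix.mul_assoc, ← Matrix.transpose_mul, ← map_mul,
      inv_mul_cancel, map_one, Matrix.transpose_one, Matrix.one_mul]
  have hBu := isUnit_of_invariant A hSchur hB0 hB
  have huniq := eq_smul_of_invariant A hSchur hBu hB
  obtain ⟨e, he⟩ := huniq Bᵀ fun g => by
    conv_rhs => rw [← hB g]
    simp only [Matrix.transpose_mul, Matrix.transpose_transpose, Matrix.mul_assoc]
  have hFS : FSind χ = e := by
    rw [← indicator_eq_of_transpose_eq A hB0 hB huniq he, FSind]
    simp only [hA]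
  have he2 : e * e = 1 := by
    have h := congrArg Matrix.transpose he
    rw [Matrix.transpose_transpose, Matrix.transpose_smul, he, smul_smul] at h
    exact smul_left_injective ℂ hB0 (by simpa using h.symm)
  rw [hFS]
  rcases mul_self_eq_one_iff.1 he2 with h | h
  · exact h
  exfalso
  rw [h, neg_one_smul] at he
  choose d F hlin hF hspan hd using fun i => exists_basis_intertwiners A (R i)
  have heven : ∀ i, Even (d i) := fun i => Nat.not_odd_iff_even.1
    (not_odd_of_alternating A hB0 hBu hB huniq he (R i) (hR i) (F i) (hlin i) (hF i) (hspan i))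
  have hsum1 : ∑ i, a i * (d i : ℤ) = 1 := by
    have : ∑ i, (a i : ℂ) * (d i : ℂ) = 1 := by
      rw [← hone]
      simp_rw [← hd, ← hRtr, ← hA]
      conv_rhs => enter [2, 2, g]; rw [hsum g, Finset.sum_mul]
      rw [Finset.sum_comm, Finset.mul_sum]
      refine Finset.sum_congr rfl fun i _ => ?_
      simp only [Finset.mul_sum]
      exact Finset.sum_congr rfl fun g _ => by ring
    exact_mod_cast this
  have h2 : (2 : ℤ) ∣ ∑ i, a i * (d i : ℤ) :=
    Finset.dvd_sum fun i _ => Dvd.dvd.mul_left (by exact_mod_cast (heven i).two_dvd) _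
  rw [hsum1] at h2
  norm_num at h2
end

section
/- Let G be a finite group, P a subgroup of G, and N a normal subgroup of P. If χ is the character of a real representation of G, then the truncation T_{P/N}(χ) is the character of a real representation of P. -/
/-!
Let `ρ` be a real representation of `G` on `V` with character `χ`. The subspace `V^N` of
`N`-invariants is stable under `P` because `P` normalizes `N`, and the truncation of `χ` is the
character of `P` on `V^N`. Indeed the averaging operator `e = |N|⁻¹ ∑_{x ∈ N} ρ x` is a projection
of `V` onto `V^N`, so the trace of `ρ h` on `V^N` is `tr (e ∘ ρ h) = |N|⁻¹ ∑_{x ∈ N} tr (ρ (x h))`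
(`trace_restrict_of_isProj`).
-/

open scoped TensorProduct Classical

/-- The truncation of a class function `χ` of `G` with respect to a subgroup `N`:
`T(χ)(h) = (1/|N|) ∑_{x ∈ N} χ(xh)`. -/
noncomputable def trunc {G : Type} [Group G] [Fintype G] (N : Subgroup G) (χ : G → ℂ) :
    G → ℂ :=
  fun h => (Nat.card ↥N : ℂ)⁻¹ * ∑ x : G, if x ∈ N then χ (x * h) else 0

/-- If `e` is a projection onto an `f`-stable subspace `W`, then the trace of `f` on `W` is the
trace of `e ∘ f`: writing `e = i ∘ q` through `W`, the restriction of `f` is `q ∘ f ∘ i`, and the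
trace is cyclic. -/
lemma trace_restrict_of_isProj {V : Type} [AddCommGroup V] [Module ℝ V] [FiniteDimensional ℝ V]
    {W : Submodule ℝ V} {e : V →ₗ[ℝ] V} (he : LinearMap.IsProj W e) (f : V →ₗ[ℝ] V)
    (hf : ∀ w ∈ W, f w ∈ W) :
    LinearMap.trace ℝ W (f.restrict hf) = LinearMap.trace ℝ V (e ∘ₗ f) := by
  have h1 : f.restrict hf = he.codRestrict ∘ₗ (f ∘ₗ W.subtype) := by
    ext w
    simpa using (he.map_id _ (hf w w.2)).symm
  rw [h1, LinearMap.trace_comp_comm', LinearMap.comp_assoc, LinearMap.trace_comp_comm']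
  congr 1

/-- Let `G` be a finite group, `P ≤ G`, and `N` a normal subgroup of `P`.  If `χ` is the
character of a real representation of `G`, then the truncation `T_{P/N}(χ)` is the
character of a real representation of `P`. -/
theorem stmt9 (G : Type) [Group G] [Fintype G] (P N : Subgroup G)
    (hNP : N ≤ P) (hnorm : ∀ p ∈ P, ∀ n ∈ N, p * n * p⁻¹ ∈ N)
    (χ : G → ℂ) (hχ : IsRealRepChar G χ) :
    IsRealRepChar ↥P (fun h : ↥P => trunc N χ ↑h) := by
  obtain ⟨V, _, _, _, ρ, hρ⟩ := hχ
  have hinv : Invertible (Fintype.card N : ℝ) :=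
    invertibleOfNonzero (by exact_mod_cast Fintype.card_ne_zero)
  let σ : Representation ℝ N V := ρ.comp N.subtype
  have hstab : ∀ p : P, ∀ v ∈ σ.invariants, ρ p v ∈ σ.invariants := by
    intro p v hv n
    have hmem : (p : G)⁻¹ * n * p ∈ N := by
      simpa using hnorm (p : G)⁻¹ (P.inv_mem p.2) n n.2
    have h1 : ρ ((p : G)⁻¹ * n * p) v = v := hv ⟨_, hmem⟩
    change ρ n (ρ p v) = ρ p v
    conv_rhs => rw [← h1]
    simp only [← Module.End.mul_apply, ← map_mul]
    congr 2
    group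
  refine ⟨σ.invariants, inferInstance, inferInstance, inferInstance,
    Representation.subrepresentation (ρ.comp P.subtype) σ.invariants hstab, fun h => ?_⟩
  have havg : σ.averageMap ∘ₗ ρ h = (Nat.card N : ℝ)⁻¹ • ∑ x : N, ρ (x * h) := by
    ext v
    simp [σ, GroupAlgebra.average, LinearMap.sum_apply]
  have htr : LinearMap.trace ℝ σ.invariants
      (Representation.subrepresentation (ρ.comp P.subtype) σ.invariants hstab h)
      = (Nat.card N : ℝ)⁻¹ * ∑ x : N, LinearMap.trace ℝ V (ρ (x * h)) := by
    have h2 := trace_restrict_of_isProj σ.isProj_averageMap (ρ h) (hstab h)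
    rw [havg, map_smul, map_sum, smul_eq_mul] at h2
    exact h2
  rw [LinearMap.trace_baseChange, htr]
  simp only [trunc, hρ, LinearMap.trace_baseChange]
  rw [← Finset.sum_filter, Finset.sum_subtype (p := (· ∈ N)) (F := inferInstanceAs (Fintype N)) _ (by simp)]
  simp
end

section
/- Let G be a finite group. Let I be a finite index set, and for each i ∈ I let P_i be a subgroup of G, let N_i be a normal subgroup of P_i, and let c_i ∈ ℤ. Let χ be the character of a real representation of G, and suppose ψ is an irreducible complex character of G such that, as class functions on G, ψ = Σ_{i ∈ I} c_i · Ind_{P_i}^G(T_{P_i/N_i}(χ)). Then the Frobenius–Schur indicator of ψ satisfies ε(ψ) = 1. -/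
/-!
Let `W` be a real representation affording `χ` and `V` an irreducible representation affording `ψ`.
Averaging an inner product gives `W` an invariant nondegenerate symmetric form, so `χ`, and with it
`ψ`, takes the same value at `g` and `g⁻¹`; thus the average of `ψ(g)²` is `⟨ψ, ψ⟩ = 1`.

If every invariant bilinear form on `V` is symmetric, then `∑ ψ(g²) = ∑ ψ(g)²`
(`sum_sq_of_symm`), and `ε(ψ) = 1`. Otherwise `V` carries a nonzero invariant alternating form, which
is nondegenerate by irreducibility. By Frobenius reciprocity (`sum_ind_trunc`) the pairing of
`Ind_P^G (T_{P/N} χ)` with `ψ` is the dimension of the invariants of `W ⊗ V` under the subgroup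
`{(h, k) | k ∈ P, h ∈ N k}` of `G × G`. The product of the forms on `W` and `V` is nondegenerate and
alternating on these invariants, so their dimension is even (`even_mult`). Hence `⟨ψ, ψ⟩ = 1` would
be an integer combination of even numbers, a contradiction.
-/

open scoped TensorProduct Classical

/-- The character of `G` induced from a character `ψ` of a subgroup `H`. -/
noncomputable def indChar {G : Type} [Group G] [Fintype G] (H : Subgroup G) (ψ : ↥H → ℂ) :
    G → ℂ :=
  fun g => (Nat.card ↥H : ℂ)⁻¹ * ∑ x : G,
    if h : x⁻¹ * g * x ∈ H then ψ ⟨x⁻¹ * g * x, h⟩ else 0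

/-! ### Parity from alternating forms -/

lemma even_of_skew {r : ℕ} (S : Matrix (Fin r) (Fin r) ℂ) (hS : S.transpose = -S)
    (hd : S.det ≠ 0) : Even r := by
  have h : S.det = (-1) ^ r * S.det := by
    conv_lhs => rw [← Matrix.det_transpose, hS, Matrix.det_neg, Fintype.card_fin]
  by_contra ho
  rw [Nat.not_even_iff_odd] at ho
  rw [ho.neg_one_pow] at h
  apply hd
  linear_combination h / 2

/-- A nondegenerate alternating form invariant under a finite group stays nondegenerate on the
space of invariants, because pairing an invariant vector with `y` is the same, up to the factor
`|Q|`, as pairing it with the orbit sum of `y`. Hence that space has even dimension. -/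
lemma even_finrank_invariants {Q U : Type*} [Group Q] [Fintype Q] [AddCommGroup U] [Module ℂ U]
    [FiniteDimensional ℂ U] (τ : Representation ℂ Q U) (K : LinearMap.BilinForm ℂ U)
    (hinv : ∀ q x y, K (τ q x) (τ q y) = K x y) (halt : ∀ x y, K x y = -K y x)
    (hnd : ∀ x, (∀ y, K x y = 0) → x = 0) :
    Even (Module.finrank ℂ τ.invariants) := by
  let b := Module.finBasis ℂ τ.invariants
  let K' : LinearMap.BilinForm ℂ τ.invariants := K.restrict τ.invariants
  have hK' : K'.Nondegenerate := by
    have hl : ∀ x : τ.invariants, (∀ y, K' x y = 0) → x = 0 := by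
      intro x hx
      apply Subtype.ext
      apply hnd
      intro y
      have hy : ∑ q, τ q y ∈ τ.invariants := by
        intro g
        rw [map_sum]
        simp_rw [← Module.End.mul_apply, ← map_mul]
        exact Fintype.sum_equiv (Equiv.mulLeft g) _ _ (fun _ => rfl)
      have h1 := hx ⟨_, hy⟩
      have h2 : K x (∑ q, τ q y) = Fintype.card Q * K x y := by
        rw [map_sum, Finset.sum_congr rfl (fun q _ => ?_), Finset.sum_const, nsmul_eq_mul,
          Finset.card_univ]
        conv_lhs => rw [← x.2 q]
        exact hinv q _ _
      have h3 : K x (∑ q, τ q y) = 0 := h1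
      rw [h2] at h3
      simpa using h3
    refine ⟨hl, fun x hx => hl x fun y => ?_⟩
    have := hx y
    change K x y = 0
    rw [halt]
    exact neg_eq_zero.mpr this
  refine even_of_skew (LinearMap.BilinForm.toMatrix b K') ?_ ?_
  · ext i j
    simp only [Matrix.transpose_apply, Matrix.neg_apply]
    exact halt _ _
  · exact (LinearMap.BilinForm.nondegenerate_iff_det_ne_zero b).mp hK'

/-- If the representation `A` preserves a nondegenerate symmetric form and `R` a nondegenerate
alternating one, then `A ⊗ R` preserves a nondegenerate alternating form (the Kronecker product of
the two), so its invariants have even dimension `d`, computed by averaging the character. -/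
lemma even_mult {Q : Type*} [Group Q] [Fintype Q] {n m : ℕ}
    (A : Q →* Matrix (Fin n) (Fin n) ℂ) (R : Q →* Matrix (Fin m) (Fin m) ℂ)
    (M : Matrix (Fin n) (Fin n) ℂ) (Y : Matrix (Fin m) (Fin m) ℂ)
    (hM : M.transpose = M) (hMd : M.det ≠ 0) (hMi : ∀ q, (A q).transpose * M * A q = M)
    (hY : Y.transpose = -Y) (hYd : Y.det ≠ 0) (hYi : ∀ q, (R q).transpose * Y * R q = Y) :
    ∃ d : ℕ, Even d ∧
      (Nat.card Q : ℂ)⁻¹ * ∑ q, (A q).trace * (R q).trace = d := by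
  let D : Q →* Matrix (Fin n × Fin m) (Fin n × Fin m) ℂ :=
    { toFun := fun q => Matrix.kronecker (A q) (R q)
      map_one' := by simp [Matrix.kronecker]
      map_mul' := fun a b => by simp [Matrix.kronecker, Matrix.mul_kronecker_mul] }
  let τ : Representation ℂ Q (Fin n × Fin m → ℂ) :=
    (Matrix.toLinAlgEquiv' : Matrix (Fin n × Fin m) (Fin n × Fin m) ℂ ≃ₐ[ℂ] _).toAlgHom.toMonoidHom.comp D
  have hτ : ∀ q x, τ q x = (D q).mulVec x := fun q x => rfl
  let L : Matrix (Fin n × Fin m) (Fin n × Fin m) ℂ := Matrix.kronecker M Y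
  have hLt : L.transpose = -L := by
    ext ⟨i, j⟩ ⟨k, l⟩
    have h1 := congrFun (congrFun hM i) k
    have h2 := congrFun (congrFun hY j) l
    simp only [Matrix.transpose_apply, Matrix.neg_apply] at h1 h2
    simp [L, Matrix.kronecker, h1, h2]
  have hLd : L.det ≠ 0 := by
    simp only [L, Matrix.kronecker, Matrix.det_kronecker]
    exact mul_ne_zero (pow_ne_zero _ hMd) (pow_ne_zero _ hYd)
  have hLi : ∀ q, (D q).transpose * L * D q = L := by
    intro q
    change (Matrix.kronecker (A q) (R q)).transpose * Matrix.kronecker M Y *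
      Matrix.kronecker (A q) (R q) = Matrix.kronecker M Y
    have : (Matrix.kronecker (A q) (R q)).transpose =
      Matrix.kronecker (A q).transpose (R q).transpose := by ext; simp [Matrix.kronecker]
    rw [this]
    simp only [Matrix.kronecker, ← Matrix.mul_kronecker_mul, hMi, hYi]
  have hLB : ∀ x y, Matrix.toBilin' L x y = x ⬝ᵥ (L.mulVec y) := fun x y => by
    rw [Matrix.toBilin'_apply']
  have hev := even_finrank_invariants τ (Matrix.toBilin' L) (fun q x y => by
      rw [hLB, hLB, hτ, hτ]
      conv_rhs => rw [← hLi q]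
      rw [← Matrix.vecMul_transpose, ← Matrix.dotProduct_mulVec, Matrix.mulVec_mulVec,
        Matrix.mulVec_mulVec, Matrix.mul_assoc]) (fun x y => by
      rw [hLB, hLB, dotProduct_comm, ← Matrix.vecMul_transpose, hLt, ← Matrix.dotProduct_mulVec,
        Matrix.neg_mulVec, dotProduct_neg]) (fun x hx => by
      have hn : (Matrix.toBilin' L).Nondegenerate :=
        (LinearMap.BilinForm.nondegenerate_toBilin'_iff_det_ne_zero).mpr hLd
      exact hn.1 x hx)
  refine ⟨_, hev, ?_⟩
  have : Invertible (Nat.card Q : ℂ) := invertibleOfNonzero (by simp)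
  rw [← Representation.card_inv_mul_sum_char_eq_finrank]
  congr 1
  refine Finset.sum_congr rfl fun q _ => ?_
  have : τ.character q = (D q).trace := Matrix.trace_toLin'_eq (D q)
  rw [this]
  exact (Matrix.trace_kronecker _ _).symm

/-! ### Matrix representations and invariant forms -/

/-- Matrix form of an irreducible representation. The last clause holds because the radical of an
invariant bilinear form is a subrepresentation. -/
lemma exists_matrix_of_irred_s10 {G : Type} [Group G] [Fintype G] {ψ : G → ℂ} (hψ : IsIrredChar G ψ) :
    ∃ (m : ℕ) (R : G →* Matrix (Fin m) (Fin m) ℂ), (∀ g, ψ g = (R g).trace) ∧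
      ((Nat.card G : ℂ)⁻¹ * ∑ g, ψ g * ψ g⁻¹ = 1) ∧
      ∀ Y : Matrix (Fin m) (Fin m) ℂ, (∀ g, (R g).transpose * Y * R g = Y) → Y ≠ 0 →
        Y.det ≠ 0 := by
  obtain ⟨V, _, _, _, _, σ, hirr, hch⟩ := hψ
  let b := Module.finBasis ℂ V
  let R : G →* Matrix (Fin (Module.finrank ℂ V)) (Fin (Module.finrank ℂ V)) ℂ :=
    (LinearMap.toMatrixAlgEquiv b).toAlgHom.toMonoidHom.comp σ
  have hR : ∀ g, R g = LinearMap.toMatrix b b (σ g) := fun g => rfl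
  refine ⟨_, R, ?_, ?_, ?_⟩
  · intro g
    rw [hch, hR, LinearMap.trace_eq_matrix_trace ℂ b]
  · have : Invertible (Nat.card G : ℂ) := invertibleOfNonzero (by simp)
    have : Nontrivial (Subrepresentation σ) := by
      refine ⟨⊥, ⊤, fun h => ?_⟩
      have := congrArg Subrepresentation.toSubmodule h
      exact bot_ne_top this
    have : Representation.IsIrreducible σ := ⟨fun U => by
      rcases hirr U.toSubmodule (fun g v hv => U.apply_mem_toSubmodule g hv) with h | h
      · left; exact Subrepresentation.toSubmodule_injective h
      · right; exact Subrepresentation.toSubmodule_injective h⟩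
    have := Representation.char_orthonormal σ σ
    rw [if_pos ⟨Representation.Equiv.refl _⟩] at this
    rw [← this]
    simp only [hch, Representation.character]
  · intro Y hY hY0 hdet
    obtain ⟨v, hv0, hv⟩ := Matrix.exists_mulVec_eq_zero_iff.mpr hdet
    let U : Submodule ℂ V := LinearMap.ker ((Matrix.toLin' Y).comp b.equivFun.toLinearMap)
    have hU : ∀ x, x ∈ U ↔ Y.mulVec (b.repr x) = 0 := fun x => Iff.rfl
    have hst : ∀ g, ∀ x ∈ U, σ g x ∈ U := by
      intro g x hx
      rw [hU] at hx ⊢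
      rw [← LinearMap.toMatrix_mulVec_repr b b (σ g) x, ← hR]
      have h1 : (R g⁻¹).transpose * (R g).transpose = 1 := by
        rw [← Matrix.transpose_mul, ← map_mul]; simp
      have h2 : Y * R g = (R g⁻¹).transpose * Y := by
        conv_rhs => rw [← hY g]
        rw [Matrix.mul_assoc, ← Matrix.mul_assoc, h1, Matrix.one_mul]
      rw [Matrix.mulVec_mulVec, h2, ← Matrix.mulVec_mulVec, hx, Matrix.mulVec_zero]
    rcases hirr U hst with h | h
    · apply hv0
      have : b.equivFun.symm v ∈ U := by
        rw [hU, ← Module.Basis.equivFun_apply, LinearEquiv.apply_symm_apply]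
        exact hv
      rw [h, Submodule.mem_bot] at this
      exact (LinearEquiv.map_eq_zero_iff _).mp this
    · apply hY0
      apply Matrix.toLin'.injective
      ext1 i
      ext1
      have : b i ∈ U := h ▸ Submodule.mem_top
      rw [hU] at this
      simpa [Finsupp.single_eq_pi_single] using this

/-- Matrix form of a complexified real representation. The form `M` is the complexification of
the positive definite real form obtained by averaging the standard inner product over `G`. -/
lemma exists_matrix_of_real_s10 {G : Type} [Group G] [Fintype G] {χ : G → ℂ}
    (hχ : IsRealRepChar G χ) :
    ∃ (n : ℕ) (A : G →* Matrix (Fin n) (Fin n) ℂ) (M : Matrix (Fin n) (Fin n) ℂ),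
      (∀ g, χ g = (A g).trace) ∧ M.transpose = M ∧ M.det ≠ 0 ∧
      ∀ g, (A g).transpose * M * A g = M := by
  obtain ⟨V, _, _, _, σ, hch⟩ := hχ
  let b := Module.finBasis ℝ V
  let A₀ : G →* Matrix (Fin (Module.finrank ℝ V)) (Fin (Module.finrank ℝ V)) ℝ :=
    (LinearMap.toMatrixAlgEquiv b).toAlgHom.toMonoidHom.comp σ
  have hA₀ : ∀ g, A₀ g = LinearMap.toMatrix b b (σ g) := fun g => rfl
  let φ : Matrix (Fin (Module.finrank ℝ V)) (Fin (Module.finrank ℝ V)) ℝ →+* Matrix _ _ ℂ :=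
    (algebraMap ℝ ℂ).mapMatrix
  let M₀ := ∑ g, (A₀ g).transpose * A₀ g
  have hM₀i : ∀ g, (A₀ g).transpose * M₀ * A₀ g = M₀ := by
    intro g
    simp only [M₀, Finset.mul_sum, Finset.sum_mul]
    refine Fintype.sum_equiv (Equiv.mulRight g) _ _ (fun h => ?_)
    simp [Matrix.transpose_mul, Matrix.mul_assoc]
  have hM₀t : M₀.transpose = M₀ := by
    simp [M₀, Matrix.transpose_sum, Matrix.transpose_mul]
  have hM₀d : M₀.det ≠ 0 := by
    have hp : M₀.PosDef := by
      have h1 : M₀ = 1 + ∑ g ∈ Finset.univ.erase (1 : G), (A₀ g).transpose * A₀ g := by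
        simp only [M₀]
        rw [← Finset.add_sum_erase _ _ (Finset.mem_univ (1 : G))]
        simp
      rw [h1]
      refine Matrix.PosDef.one.add_posSemidef (Matrix.posSemidef_sum _ fun g _ => ?_)
      simpa using Matrix.posSemidef_conjTranspose_mul_self (A₀ g)
    exact hp.det_pos.ne'
  refine ⟨_, φ.toMonoidHom.comp A₀, φ M₀, ?_, ?_, ?_, ?_⟩
  · intro g
    rw [hch, LinearMap.trace_baseChange, LinearMap.trace_eq_matrix_trace ℝ b, ← hA₀]
    simp [φ, Matrix.trace]
  · have := congrArg φ hM₀t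
    simpa [φ, Matrix.transpose_map] using this
  · rw [← RingHom.map_det]
    simpa using hM₀d
  · intro g
    have := congrArg φ (hM₀i g)
    rw [map_mul, map_mul] at this
    exact this

lemma trace_inv_of_form {G : Type*} [Group G] {n : ℕ} (A : G →* Matrix (Fin n) (Fin n) ℂ)
    (M : Matrix (Fin n) (Fin n) ℂ) (hMd : M.det ≠ 0)
    (hMi : ∀ g, (A g).transpose * M * A g = M) (g : G) : (A g⁻¹).trace = (A g).trace := by
  have hu : IsUnit M.det := isUnit_iff_ne_zero.mpr hMd
  have h1 : (A g).transpose * M = M * A g⁻¹ := by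
    conv_rhs => rw [← hMi g]
    rw [Matrix.mul_assoc _ (A g), ← map_mul]; simp
  have h2 : A g⁻¹ = M⁻¹ * ((A g).transpose * M) := by
    rw [h1, ← Matrix.mul_assoc, Matrix.nonsing_inv_mul _ hu, Matrix.one_mul]
  rw [h2, Matrix.trace_mul_comm, Matrix.mul_assoc, Matrix.mul_nonsing_inv _ hu, Matrix.mul_one,
    Matrix.trace_transpose]

/-- If every invariant bilinear form is symmetric, then `∑ ψ(g²) = ∑ ψ(g)²`. Averaging an
elementary matrix gives an invariant form with entries `∑ R(g) j a * R(g) i c`; its symmetry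
identifies the terms of the two sums. -/
lemma sum_sq_of_symm {G : Type} [Group G] [Fintype G] {m : ℕ}
    (R : G →* Matrix (Fin m) (Fin m) ℂ)
    (hs : ∀ X : Matrix (Fin m) (Fin m) ℂ, (∀ g, (R g).transpose * X * R g = X) →
      X.transpose = X) :
    ∑ g, (R (g * g)).trace = ∑ g, (R g).trace * (R g).trace := by
  let E : Matrix (Fin m) (Fin m) ℂ → Matrix (Fin m) (Fin m) ℂ :=
    fun X => ∑ g, (R g).transpose * X * R g
  have hE : ∀ X, (E X).transpose = E X := fun X => hs _ fun g => by
    simp only [E, Finset.mul_sum, Finset.sum_mul]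
    refine Fintype.sum_equiv (Equiv.mulRight g) _ _ (fun h => ?_)
    simp [Matrix.transpose_mul, Matrix.mul_assoc]
  have hEe : ∀ i j a c, E (Matrix.single j i 1) a c = ∑ g, R g j a * R g i c := by
    intro i j a c
    simp only [E, Matrix.sum_apply]
    refine Finset.sum_congr rfl fun g _ => ?_
    simp [Matrix.mul_apply, Matrix.single_apply, ite_and]
  have key : ∀ i j, ∑ g, R g i j * R g j i = ∑ g, R g i i * R g j j := by
    intro i j
    have h := congrFun (congrFun (hE (Matrix.single j i 1)) j) i
    rw [Matrix.transpose_apply, hEe, hEe] at h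
    simp_rw [mul_comm (R _ i _)]
    exact h
  simp only [map_mul, Matrix.trace, Matrix.diag, Matrix.mul_apply, Finset.sum_mul_sum]
  rw [Finset.sum_comm]
  conv_rhs => rw [Finset.sum_comm]
  refine Finset.sum_congr rfl fun i _ => ?_
  rw [Finset.sum_comm]
  conv_rhs => rw [Finset.sum_comm]
  exact Finset.sum_congr rfl fun j _ => key i j

/-! ### Induction, truncation and reciprocity -/

/-- The subgroup `{(h, k) | k ∈ P, h ∈ N k}` of `G × G`, for `N` normalized by `P`. Averaging
`χ(h) ψ(k)` over it amounts to averaging `T_{P/N}(χ) ψ` over `P`. -/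
def pairGroup {G : Type} [Group G] (P N : Subgroup G)
    (hnorm : ∀ p ∈ P, ∀ n ∈ N, p * n * p⁻¹ ∈ N) : Subgroup (G × G) where
  carrier := {q | q.2 ∈ P ∧ q.1 * q.2⁻¹ ∈ N}
  one_mem' := by simp
  mul_mem' := by
    rintro ⟨a, p⟩ ⟨b, q⟩ ⟨hp, ha⟩ ⟨hq, hb⟩
    refine ⟨P.mul_mem hp hq, ?_⟩
    have := N.mul_mem ha (hnorm p hp _ hb)
    simpa [mul_assoc] using this
  inv_mem' := by
    rintro ⟨a, p⟩ ⟨hp, ha⟩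
    refine ⟨P.inv_mem hp, ?_⟩
    have := hnorm _ (P.inv_mem hp) _ (N.inv_mem ha)
    simpa [mul_assoc] using this

lemma sum_pairGroup {G : Type} [Group G] [Fintype G] (P N : Subgroup G)
    (hnorm : ∀ p ∈ P, ∀ n ∈ N, p * n * p⁻¹ ∈ N) (f : G → G → ℂ) :
    ∑ q : pairGroup P N hnorm, f q.1.1 q.1.2 =
      ∑ k : G, if k ∈ P then ∑ x : G, (if x ∈ N then f (x * k) k else 0) else 0 := by
  have h0 : ∑ q : pairGroup P N hnorm, f q.1.1 q.1.2 =
      ∑ q : G × G, if q ∈ pairGroup P N hnorm then f q.1 q.2 else 0 := by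
    rw [← Finset.sum_filter]
    exact (Finset.sum_subtype (Finset.univ.filter (· ∈ pairGroup P N hnorm)) (by simp)
      (fun q : G × G => f q.1 q.2)).symm
  rw [h0, Fintype.sum_prod_type_right]
  refine Finset.sum_congr rfl fun k _ => ?_
  have hm : ∀ h, (h, k) ∈ pairGroup P N hnorm ↔ k ∈ P ∧ h * k⁻¹ ∈ N := fun h => Iff.rfl
  split_ifs with hk
  · refine (Fintype.sum_equiv (Equiv.mulRight k) _ _ fun x => ?_).symm
    simp [hm, hk]
  · exact Finset.sum_eq_zero fun h _ => by simp [hm, hk]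

lemma card_pairGroup {G : Type} [Group G] [Fintype G] (P N : Subgroup G)
    (hnorm : ∀ p ∈ P, ∀ n ∈ N, p * n * p⁻¹ ∈ N) :
    (Nat.card (pairGroup P N hnorm) : ℂ) = Nat.card P * Nat.card N := by
  have hc : ∀ H : Subgroup G, (Nat.card H : ℂ) = ∑ x : G, if x ∈ H then 1 else 0 := by
    intro H
    rw [Finset.sum_boole, Nat.card_eq_fintype_card, Fintype.card_subtype]
  have := sum_pairGroup P N hnorm (fun _ _ => 1)
  simp only [← hc] at this
  rw [hc P, Finset.sum_mul]
  simpa [ite_mul] using this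

/-- Frobenius reciprocity: the pairing of `Ind_P^G (T_{P/N} χ)` with `ψ` over `G` is the average of
`χ(h) ψ(k)` over `pairGroup P N`. -/
lemma sum_ind_trunc {G : Type} [Group G] [Fintype G] (P N : Subgroup G)
    (hnorm : ∀ p ∈ P, ∀ n ∈ N, p * n * p⁻¹ ∈ N) (χ ψ : G → ℂ)
    (hψ : ∀ x g, ψ (x * g * x⁻¹) = ψ g) :
    (Nat.card G : ℂ)⁻¹ * ∑ g, indChar P (fun h : P => trunc N χ h) g * ψ g =
      (Nat.card (pairGroup P N hnorm) : ℂ)⁻¹ *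
        ∑ q : pairGroup P N hnorm, χ q.1.1 * ψ q.1.2 := by
  rw [card_pairGroup, sum_pairGroup P N hnorm (fun a b => χ a * ψ b)]
  have h1 : ∀ x : G, (∑ g : G, (if x⁻¹ * g * x ∈ P then trunc N χ (x⁻¹ * g * x) else 0) * ψ g)
      = ∑ k : G, if k ∈ P then trunc N χ k * ψ k else 0 := by
    intro x
    refine (Fintype.sum_equiv (MulAut.conj x).toEquiv _ _ fun k => ?_).symm
    have : x⁻¹ * (x * k * x⁻¹) * x = k := by group
    simp [this, hψ, ite_mul]
  have h2 : ∑ g, indChar P (fun h : P => trunc N χ h) g * ψ g =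
      (Nat.card P : ℂ)⁻¹ * (Nat.card G * ∑ k : G, if k ∈ P then trunc N χ k * ψ k else 0) := by
    simp only [indChar, dite_eq_ite, mul_assoc, ← Finset.mul_sum]
    simp only [← mul_assoc, Finset.sum_mul]
    rw [Finset.sum_comm, Finset.sum_congr rfl fun x _ => h1 x]
    simp [mul_assoc]
  have h3 : (∑ k : G, if k ∈ P then trunc N χ k * ψ k else 0) = (Nat.card N : ℂ)⁻¹ *
      ∑ k : G, if k ∈ P then ∑ x : G, (if x ∈ N then χ (x * k) * ψ k else 0) else 0 := by
    rw [Finset.mul_sum]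
    refine Finset.sum_congr rfl fun k _ => ?_
    split_ifs
    · simp only [trunc, mul_assoc, Finset.sum_mul, ite_mul, zero_mul]
    · simp
  have hG : (Nat.card G : ℂ) ≠ 0 := by simp
  rw [h2, h3]
  field_simp

lemma indtrunc_inv {G : Type} [Group G] [Fintype G] (P N : Subgroup G)
    (χ : G → ℂ) (hc : ∀ g h, χ (g * h) = χ (h * g)) (hi : ∀ g, χ g⁻¹ = χ g) (g : G) :
    indChar P (fun h : P => trunc N χ h) g⁻¹ = indChar P (fun h : P => trunc N χ h) g := by
  have ht : ∀ h, trunc N χ h⁻¹ = trunc N χ h := by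
    intro h
    simp only [trunc]
    congr 1
    refine Fintype.sum_equiv (Equiv.inv G) _ _ fun x => ?_
    have : χ (x * h⁻¹) = χ (x⁻¹ * h) := by rw [← hi, hc x⁻¹ h]; simp
    simp [this]
  simp only [indChar, dite_eq_ite]
  congr 1
  refine Finset.sum_congr rfl fun x _ => ?_
  have : x⁻¹ * g⁻¹ * x = (x⁻¹ * g * x)⁻¹ := by group
  rw [this, ht, inv_mem_iff]

/-! ### The Frobenius–Schur indicator -/

/-- If `χ` is the character of a real representation of a finite group `G` and the
irreducible character `ψ` is an integer combination of characters induced from the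
truncations `T_{P_i/N_i}(χ)`, then `ε(ψ) = 1`. -/
theorem stmt10 (G : Type) [Group G] [Fintype G] (ι : Type) [Fintype ι]
    (P N : ι → Subgroup G) (hNP : ∀ i : ι, N i ≤ P i)
    (hnorm : ∀ i : ι, ∀ p ∈ P i, ∀ n ∈ N i, p * n * p⁻¹ ∈ N i)
    (c : ι → ℤ) (χ : G → ℂ) (hχ : IsRealRepChar G χ)
    (ψ : G → ℂ) (hψ : IsIrredChar G ψ)
    (heq : ∀ g : G, ψ g =
      ∑ i : ι, (c i : ℂ) * indChar (P i) (fun h : ↥(P i) => trunc (N i) χ ↑h) g) :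
    FSind ψ = 1 := by
  obtain ⟨m, R, hR, horth, hnd⟩ := exists_matrix_of_irred_s10 hψ
  obtain ⟨n, A, M, hA, hMt, hMd, hMi⟩ := exists_matrix_of_real_s10 hχ
  have hχi : ∀ g, χ g⁻¹ = χ g := fun g => by
    rw [hA, hA, trace_inv_of_form A M hMd hMi]
  have hχc : ∀ g h, χ (g * h) = χ (h * g) := fun g h => by
    rw [hA, hA, map_mul, map_mul, Matrix.trace_mul_comm]
  have hψc : ∀ x g, ψ (x * g * x⁻¹) = ψ g := fun x g => by
    rw [hR, hR, map_mul, Matrix.trace_mul_comm, ← map_mul]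
    simp
  have hψi : ∀ g, ψ g⁻¹ = ψ g := fun g => by
    simp only [heq, indtrunc_inv _ _ χ hχc hχi]
  have h1 : (Nat.card G : ℂ)⁻¹ * ∑ g, ψ g * ψ g = 1 := by
    simpa only [hψi] using horth
  by_cases hs : ∀ X : Matrix (Fin m) (Fin m) ℂ, (∀ g, (R g).transpose * X * R g = X) →
      X.transpose = X
  · rw [FSind, ← Nat.card_eq_fintype_card]
    simp only [hR] at h1 ⊢
    rw [sum_sq_of_symm R hs, h1]
  -- A nonsymmetric invariant form yields a nonzero, hence nondegenerate, alternating one; all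
  -- multiplicities are then even, which contradicts `⟨ψ, ψ⟩ = 1`.
  · exfalso
    push Not at hs
    obtain ⟨X, hX, hXt⟩ := hs
    let Y := X.transpose - X
    have hYi : ∀ g, (R g).transpose * Y * R g = Y := fun g => by
      have h := congrArg Matrix.transpose (hX g)
      simp only [Matrix.transpose_mul, Matrix.transpose_transpose, ← Matrix.mul_assoc] at h
      simp only [Y, Matrix.mul_sub, Matrix.sub_mul, hX, h]
    have hYt : Y.transpose = -Y := by simp [Y]
    have hYd : Y.det ≠ 0 := hnd Y hYi (sub_ne_zero.mpr hXt)
    have hev : ∀ i, ∃ d : ℕ, Even d ∧ (Nat.card G : ℂ)⁻¹ *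
        ∑ g, indChar (P i) (fun h : P i => trunc (N i) χ h) g * ψ g = d := by
      intro i
      rw [sum_ind_trunc (P i) (N i) (hnorm i) χ ψ hψc]
      let Q := pairGroup (P i) (N i) (hnorm i)
      simp only [hA, hR]
      exact even_mult (A.comp ((MonoidHom.fst G G).comp Q.subtype))
        (R.comp ((MonoidHom.snd G G).comp Q.subtype)) M Y hMt hMd (fun q => hMi _) hYt hYd
        (fun q => hYi _)
    choose d hd hdeq using hev
    have h2 : (1 : ℂ) = ((∑ i, c i * d i : ℤ) : ℂ) := by
      rw [← h1]
      push_cast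
      simp only [← hdeq]
      conv_lhs =>
        enter [2, 2, g]
        rw [heq g, Finset.sum_mul]
      rw [Finset.sum_comm, Finset.mul_sum]
      refine Finset.sum_congr rfl fun i _ => ?_
      simp only [← heq, mul_assoc, ← Finset.mul_sum]
      ring
    have h3 : (1 : ℤ) = ∑ i, c i * d i := by exact_mod_cast h2
    have h4 : Even (1 : ℤ) := by
      rw [h3]
      exact Finset.even_sum _ fun i _ => ((Int.even_coe_nat _).mpr (hd i)).mul_left _
    exact absurd h4 (by decide)
end

section
/- Let G be a finite group. Let I be a finite index set, and for each i ∈ I let P_i be a subgroup of G, let N_i be a normal subgroup of P_i, and let c_i ∈ ℤ. Let χ be an irreducible complex character of G with central character ω_χ, and let φ be the virtual character φ = Σ_{i ∈ I} c_i · Ind_{P_i}^G(T_{P_i/N_i}(χ)). Then for every central element z ∈ Z(G) such that z ∈ P_i for all i ∈ I, we have φ(z) = ω_χ(z) · φ(1). In particular, if ψ is an irreducible character of G with ψ = φ or ψ = −φ, then ω_ψ(z) = ω_χ(z) for all such z. -/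
/-! Since `z` is central, conjugation fixes it, so inducing from a subgroup containing `z` multiplies
the value at `z` and the value at `1` by the same index `|G| / |H|` (`indChar_central`), and
truncation commutes with translation by `z` (`trunc_central`). Each summand of `φ` therefore satisfies
`f z = ω * f 1`. The statement on `ψ = ±φ` follows because `ψ 1` is the dimension of a nonzero
space. -/

open scoped TensorProduct Classical

lemma indChar_central {G : Type} [Group G] [Fintype G] (H : Subgroup G) (ψ : ↥H → ℂ)
    {z : G} (hz : z ∈ Subgroup.center G) (hzH : z ∈ H) :
    indChar H ψ z = (Nat.card ↥H : ℂ)⁻¹ * ((Fintype.card G : ℂ) * ψ ⟨z, hzH⟩) := by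
  have hconj : ∀ x : G, x⁻¹ * z * x = z := fun x => by
    rw [mul_assoc, ← Subgroup.mem_center_iff.mp hz x, inv_mul_cancel_left]
  have hterm : ∀ x : G,
      (if h : x⁻¹ * z * x ∈ H then ψ ⟨x⁻¹ * z * x, h⟩ else 0) = ψ ⟨z, hzH⟩ := fun x => by
    simp only [hconj, hzH, dif_pos]
  simp only [indChar, hterm, Finset.sum_const, Finset.card_univ, nsmul_eq_mul]

lemma trunc_central {G : Type} [Group G] [Fintype G] (N : Subgroup G) (χ : G → ℂ)
    {z : G} (hz : z ∈ Subgroup.center G) {ω : ℂ} (hω : ∀ g : G, χ (z * g) = ω * χ g) :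
    trunc N χ z = ω * trunc N χ 1 := by
  have hχ : ∀ x : G, χ (x * z) = ω * χ x := fun x => by
    rw [Subgroup.mem_center_iff.mp hz x, hω]
  simp only [trunc, hχ, mul_one, ← mul_ite_zero, ← Finset.mul_sum]
  ring

lemma IsIrredChar.apply_one_ne_zero {G : Type} [Group G] {χ : G → ℂ} (hχ : IsIrredChar G χ) :
    χ 1 ≠ 0 := by
  obtain ⟨V, _, _, _, _, ρ, -, h⟩ := hχ
  rw [h, map_one, LinearMap.trace_one]
  exact_mod_cast Module.finrank_pos.ne'

/-- Let `χ` be an irreducible complex character of a finite group `G` with central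
character `ω` at the central element `z`, and let `φ = ∑ᵢ cᵢ Ind_{Pᵢ}^G(T_{Pᵢ/Nᵢ}(χ))`
with `z ∈ Pᵢ` for all `i`.  Then `φ(z) = ω(z) φ(1)`; in particular any irreducible
character `ψ = ±φ` has the same central character at `z` as `χ`. -/
theorem stmt12 (G : Type) [Group G] [Fintype G] (ι : Type) [Fintype ι]
    (P N : ι → Subgroup G) (hNP : ∀ i : ι, N i ≤ P i)
    (hnorm : ∀ i : ι, ∀ p ∈ P i, ∀ n ∈ N i, p * n * p⁻¹ ∈ N i)
    (c : ι → ℤ) (χ : G → ℂ) (hχ : IsIrredChar G χ)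
    (z : G) (hz : z ∈ Subgroup.center G) (hzP : ∀ i : ι, z ∈ P i)
    (ω : ℂ) (hω : ∀ g : G, χ (z * g) = ω * χ g)
    (φ : G → ℂ)
    (hφ : ∀ g : G, φ g =
      ∑ i : ι, (c i : ℂ) * indChar (P i) (fun h : ↥(P i) => trunc (N i) χ ↑h) g) :
    φ z = ω * φ 1 ∧
    ∀ ψ : G → ℂ, IsIrredChar G ψ → ∀ ωψ : ℂ, (∀ g : G, ψ (z * g) = ωψ * ψ g) →
      ((∀ g : G, ψ g = φ g) ∨ (∀ g : G, ψ g = -φ g)) → ωψ = ω := by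
  have hmain : φ z = ω * φ 1 := by
    rw [hφ, hφ, Finset.mul_sum]
    refine Finset.sum_congr rfl fun i _ => ?_
    rw [indChar_central _ _ hz (hzP i), indChar_central _ _ (one_mem _) (one_mem _)]
    simp only [trunc_central (N i) χ hz hω]
    ring
  refine ⟨hmain, fun ψ hψ ωψ hωψ hψφ => ?_⟩
  refine mul_right_cancel₀ hψ.apply_one_ne_zero ?_
  rw [← hωψ 1, mul_one]
  rcases hψφ with h | h
  · rw [h, h, hmain]
  · rw [h, h, hmain, mul_neg]
end
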